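/- Let G be a simple graph on n vertices with n ≥ 3m² + 4m, and let c be an edge coloring of G such that the total color degree of G is at least 2mn. Then G contains a rainbow matching of size m under c. -/

import Mathlib

/-!
By induction on `m`. If some vertex `v` has color degree more than `3 * m`, delete it: this costs at
most `2 * (n - 1)` in total color degree, so `G - v` has a rainbow matching `M` of size `m`, and
at most `m + 2 * m` of the colors at `v` are used by `M` or lead to vertices of `M`, so that `M`
extends by an edge at `v`. To keep the vertex type fixed, deleting `v` means deleting its edges and
erasing it from a finite set `S` of vertices that contains the support of the graph; `n` is the
size of `S`.

Otherwise take a rainbow matching `M` of size `m` of `G` itself. Since all color degrees are at most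
`3 * m`, the count of colors leaves more than `4 * m` vertices outside `M` of color degree more
than `2 * m`. Unless `M` extends by a single edge, each of these is attached to an edge `e = xy`
of `M`: it sends edges of two distinct new colors to `x` and `y`, and it has an edge of color `c e`.
Some `e` has five attached vertices. One of them, `w`, has an edge `wz` of color `c e`; removing `e`
and the edge of `M` at `z`, if any, makes room for `wz` and for two new-colored edges from other
attached vertices to `x` and `y`.
-/

variable {V : Type*} {α : Type*}

/-- `M` is a rainbow matching in `G` under the edge coloring `c`: its elements are
edges of `G`, pairwise vertex-disjoint, and receive pairwise distinct colors. -/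
def IsRainbowMatching (G : SimpleGraph V) (c : Sym2 V → α) (M : Finset (Sym2 V)) : Prop :=
  ↑M ⊆ G.edgeSet ∧
  (∀ e ∈ M, ∀ f ∈ M, e ≠ f → ∀ v : V, v ∈ e → v ∉ f) ∧
  ∀ e ∈ M, ∀ f ∈ M, c e = c f → e = f

/-- The color degree of `v`: the number of distinct colors appearing on edges incident to `v`. -/
noncomputable def colorDegree (G : SimpleGraph V) (c : Sym2 V → α) (v : V) : ℕ :=
  (c '' G.incidenceSet v).ncard

/-- The total color degree of `G`: the sum of color degrees over all vertices. -/
noncomputable def totalColorDegree [Fintype V] (G : SimpleGraph V) (c : Sym2 V → α) : ℕ :=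
  ∑ v : V, colorDegree G c v

section

open Finset

variable {G G' : SimpleGraph V} {c : Sym2 V → α} {M N : Finset (Sym2 V)} {S : Finset V}
  {e f : Sym2 V} {v w z : V}

lemma exists_ne_and_apply_ne_apply {ι β : Type*} {s : Finset ι} {f g : ι → β} (hs : 2 < #s)
    (hfg : ∀ i ∈ s, f i ≠ g i) : ∃ p ∈ s, ∃ q ∈ s, p ≠ q ∧ f p ≠ g q := by
  obtain ⟨i, j, k, hi, hj, hk, hij, hik, hjk⟩ := two_lt_card_iff.1 hs
  by_contra! hall
  exact hfg k hk <| calc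
    f k = g j := hall k hk j hj hjk.symm
    _ = f i := (hall i hi j hj hij).symm
    _ = g k := hall i hi k hk hik

lemma sum_le_mul_card_add_mul_card_filter {ι : Type*} {s : Finset ι} {f : ι → ℕ} {a b : ℕ}
    (hf : ∀ i ∈ s, f i ≤ a + b) : ∑ i ∈ s, f i ≤ a * #s + b * #{i ∈ s | a < f i} := calc
  ∑ i ∈ s, f i ≤ ∑ i ∈ s, (a + if a < f i then b else 0) := by
    refine sum_le_sum fun i hi ↦ ?_
    have := hf i hi
    split_ifs <;> omega
  _ = a * #s + b * #{i ∈ s | a < f i} := by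
    rw [sum_add_distrib, ← sum_filter, sum_const, sum_const, smul_eq_mul, smul_eq_mul,
      mul_comm a, mul_comm b]

lemma mem_image_incidenceSet {a : α} :
    a ∈ c '' G.incidenceSet v ↔ ∃ z, G.Adj v z ∧ c s(v, z) = a := by
  constructor
  · rintro ⟨e, ⟨he, hv⟩, rfl⟩
    obtain ⟨z, rfl⟩ := Sym2.mem_iff_exists.1 hv
    exact ⟨z, he, rfl⟩
  · rintro ⟨z, hz, rfl⟩
    exact ⟨s(v, z), ⟨hz, Sym2.mem_mk_left v z⟩, rfl⟩

lemma colorDegree_le_card {F : Finset α} (hF : ∀ z, G.Adj v z → c s(v, z) ∈ F) :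
    colorDegree G c v ≤ #F := by
  rw [colorDegree, ← Set.ncard_coe_finset]
  refine Set.ncard_le_ncard (fun a ha ↦ ?_)
  obtain ⟨z, hz, rfl⟩ := mem_image_incidenceSet.1 ha
  exact hF z hz

lemma colorDegree_lt_card (hS : G.support ⊆ S) (hv : v ∈ S) : colorDegree G c v < #S := by
  classical
  calc
    colorDegree G c v ≤ #((S.erase v).image fun z ↦ c s(v, z)) :=
      colorDegree_le_card fun z hz ↦
        mem_image_of_mem _ (mem_erase.2 ⟨hz.ne', hS ⟨v, hz.symm⟩⟩)
    _ ≤ #(S.erase v) := card_image_le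
    _ < #S := card_erase_lt_of_mem hv

lemma colorDegree_le_deleteIncidenceSet_add_one (hwv : w ≠ v) :
    colorDegree G c w ≤ colorDegree (G.deleteIncidenceSet v) c w + 1 := by
  have hsub : c '' G.incidenceSet w ⊆
      insert (c s(w, v)) (c '' (G.deleteIncidenceSet v).incidenceSet w) := by
    intro a ha
    obtain ⟨z, hz, rfl⟩ := mem_image_incidenceSet.1 ha
    obtain rfl | hzv := eq_or_ne z v
    · exact Set.mem_insert _ _
    · exact Set.mem_insert_of_mem _ <| mem_image_incidenceSet.2
        ⟨z, SimpleGraph.deleteIncidenceSet_adj.2 ⟨hz, hwv, hzv⟩, rfl⟩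
  by_cases hfin : (c '' G.incidenceSet w).Finite
  · have hfin' : (c '' (G.deleteIncidenceSet v).incidenceSet w).Finite := hfin.subset <|
      Set.image_mono fun e he ↦ ⟨SimpleGraph.edgeSet_mono (G.deleteIncidenceSet_le v) he.1, he.2⟩
    exact (Set.ncard_le_ncard hsub (hfin'.insert _)).trans (Set.ncard_insert_le _ _)
  · simp [colorDegree, Set.Infinite.ncard hfin]

lemma sum_colorDegree_le_sum_deleteIncidenceSet [DecidableEq V] (hS : G.support ⊆ S)
    (hv : v ∈ S) :
    ∑ w ∈ S, colorDegree G c w ≤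
      ∑ w ∈ S.erase v, colorDegree (G.deleteIncidenceSet v) c w + 2 * #(S.erase v) := by
  have hv_le : colorDegree G c v ≤ #(S.erase v) := by
    rw [card_erase_of_mem hv]
    exact Nat.le_sub_one_of_lt (colorDegree_lt_card hS hv)
  have hrest : ∑ w ∈ S.erase v, colorDegree G c w ≤
      ∑ w ∈ S.erase v, (colorDegree (G.deleteIncidenceSet v) c w + 1) :=
    sum_le_sum fun w hw ↦ colorDegree_le_deleteIncidenceSet_add_one (ne_of_mem_erase hw)
  rw [sum_add_distrib, sum_const, smul_eq_mul, mul_one] at hrest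
  rw [← add_sum_erase S _ hv]
  omega

lemma support_deleteIncidenceSet_subset [DecidableEq V] (hS : G.support ⊆ S) :
    (G.deleteIncidenceSet v).support ⊆ S.erase v := by
  rintro a ⟨b, hab⟩
  obtain ⟨hab, hav, -⟩ := SimpleGraph.deleteIncidenceSet_adj.1 hab
  exact mem_erase.2 ⟨hav, hS ⟨b, hab⟩⟩

/-- The vertices covered by a finite set of edges, as in the vertex set of a matching. -/
def coveredVertices [DecidableEq V] (M : Finset (Sym2 V)) : Finset V :=
  M.biUnion Sym2.toFinset

lemma mem_coveredVertices [DecidableEq V] : v ∈ coveredVertices M ↔ ∃ e ∈ M, v ∈ e := by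
  simp [coveredVertices]

lemma coveredVertices_mono [DecidableEq V] (h : N ⊆ M) :
    coveredVertices N ⊆ coveredVertices M :=
  biUnion_subset_biUnion_of_subset_left _ h

lemma mem_coveredVertices_insert [DecidableEq V] :
    v ∈ coveredVertices (insert e M) ↔ v ∈ e ∨ v ∈ coveredVertices M := by
  simp [mem_coveredVertices]

lemma card_coveredVertices_le [DecidableEq V] : #(coveredVertices M) ≤ 2 * #M := by
  rw [mul_comm]
  refine card_biUnion_le_card_mul _ _ _ fun e _ ↦ ?_
  rw [Sym2.card_toFinset]
  split_ifs <;> omega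

lemma card_insert_of_color_ne [DecidableEq V] (hc : ∀ f ∈ M, c f ≠ c e) :
    #(insert e M) = #M + 1 :=
  card_insert_of_notMem fun h ↦ hc e h rfl

namespace IsRainbowMatching

lemma empty : IsRainbowMatching G c ∅ := by
  simp [IsRainbowMatching]

lemma subset (hM : IsRainbowMatching G c M) (h : N ⊆ M) : IsRainbowMatching G c N :=
  ⟨fun _ he ↦ hM.1 (h he), fun e he f hf ↦ hM.2.1 e (h he) f (h hf),
    fun e he f hf ↦ hM.2.2 e (h he) f (h hf)⟩

lemma exists_card_eq {k : ℕ} (hM : IsRainbowMatching G c M) (hk : k ≤ #M) :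
    ∃ N, IsRainbowMatching G c N ∧ #N = k := by
  obtain ⟨N, hNM, hN⟩ := exists_subset_card_eq hk
  exact ⟨N, hM.subset hNM, hN⟩

lemma mono (hM : IsRainbowMatching G' c M) (h : G' ≤ G) : IsRainbowMatching G c M :=
  ⟨hM.1.trans (SimpleGraph.edgeSet_mono h), hM.2⟩

lemma insert [DecidableEq V] (hM : IsRainbowMatching G c M) (he : e ∈ G.edgeSet)
    (hcov : ∀ v ∈ e, v ∉ coveredVertices M) (hc : ∀ f ∈ M, c f ≠ c e) :
    IsRainbowMatching G c (insert e M) := by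
  have hdisj : ∀ f ∈ M, ∀ v ∈ f, v ∉ e := fun f hf v hvf hve ↦
    hcov v hve (mem_coveredVertices.2 ⟨f, hf, hvf⟩)
  obtain ⟨hedge, hmatch, hrainbow⟩ := hM
  refine ⟨by simp [Set.insert_subset_iff, he, hedge], ?_, ?_⟩ <;>
    simp only [mem_insert, forall_eq_or_imp] <;> grind

lemma exists_card_eq_add_two_of_disjoint [DecidableEq V] (hM : IsRainbowMatching G c M)
    (he : e ∈ G.edgeSet) (he_cov : ∀ v ∈ e, v ∉ coveredVertices M) (he_color : ∀ g ∈ M, c g ≠ c e)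
    (hf : f ∈ G.edgeSet) (hf_cov : ∀ v ∈ f, v ∉ coveredVertices M) (hf_color : ∀ g ∈ M, c g ≠ c f)
    (hdisj : ∀ v ∈ e, v ∉ f) (hef : c e ≠ c f) :
    ∃ N, IsRainbowMatching G c N ∧ #N = #M + 2 := by
  have hf_color' : ∀ g ∈ Insert.insert e M, c g ≠ c f := by
    simpa [hef] using hf_color
  have hf_cov' : ∀ v ∈ f, v ∉ coveredVertices (Insert.insert e M) := fun v hvf hv ↦
    (mem_coveredVertices_insert.1 hv).elim (fun hve ↦ hdisj v hve hvf) (hf_cov v hvf)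
  refine ⟨_, (hM.insert he he_cov he_color).insert hf hf_cov' hf_color', ?_⟩
  rw [card_insert_of_color_ne hf_color', card_insert_of_color_ne he_color]

lemma notMem_coveredVertices_deleteIncidenceSet [DecidableEq V]
    (hM : IsRainbowMatching (G.deleteIncidenceSet v) c M) : v ∉ coveredVertices M := by
  intro hv
  obtain ⟨e, he, hve⟩ := mem_coveredVertices.1 hv
  obtain ⟨z, rfl⟩ := Sym2.mem_iff_exists.1 hve
  exact (SimpleGraph.deleteIncidenceSet_adj.1 (hM.1 he)).2.1 rfl

lemma exists_card_eq_succ_of_three_mul_card_lt_colorDegree [DecidableEq V]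
    (hM : IsRainbowMatching G c M) (hv : v ∉ coveredVertices M)
    (hd : 3 * #M < colorDegree G c v) :
    ∃ N, IsRainbowMatching G c N ∧ #N = #M + 1 := by
  classical
  let F : Finset α := M.image c ∪ (coveredVertices M).image fun z ↦ c s(v, z)
  have hF : #F ≤ 3 * #M := calc
    #F ≤ #(M.image c) + #((coveredVertices M).image fun z ↦ c s(v, z)) := card_union_le _ _
    _ ≤ #M + 2 * #M :=
      add_le_add card_image_le (card_image_le.trans card_coveredVertices_le)
    _ = 3 * #M := by ring
  obtain ⟨z, hz, hzF⟩ : ∃ z, G.Adj v z ∧ c s(v, z) ∉ F := by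
    by_contra! hall
    have := colorDegree_le_card hall
    omega
  simp only [F, mem_union, mem_image, not_or, not_exists, not_and] at hzF
  refine ⟨_, hM.insert (e := s(v, z)) hz ?_ hzF.1, card_insert_of_color_ne hzF.1⟩
  rintro u hu
  obtain rfl | rfl := Sym2.mem_iff.1 hu
  · exact hv
  · exact fun hcov ↦ hzF.2 u hcov rfl

end IsRainbowMatching

/-- The vertex `w` is attached to the edge `e` relative to the edge set `M`: it is joined to both
ends of `e` by edges of distinct colors not occurring in `M`, and some edge at `w` has the color
of `e`. These edges are used to exchange `e` for a larger set of edges. -/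
structure IsAttached (G : SimpleGraph V) (c : Sym2 V → α) (M : Finset (Sym2 V)) (w : V)
    (e : Sym2 V) : Prop where
  adj : ∀ x ∈ e, G.Adj w x
  color_ne : ∀ x ∈ e, ∀ f ∈ M, c f ≠ c s(w, x)
  injOn : ∀ x ∈ e, ∀ y ∈ e, c s(w, x) = c s(w, y) → x = y
  exists_adj_color_eq : ∃ z, G.Adj w z ∧ c s(w, z) = c e

lemma IsAttached.notMem (h : IsAttached G c M w e) : w ∉ e :=
  fun hw ↦ (h.adj w hw).ne rfl

lemma exists_card_le_two_of_not_isAttached (h : ¬ IsAttached G c M w e) :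
    ∃ F : Finset α, #F ≤ 2 ∧ ∀ z, G.Adj w z →
      (c s(w, z) = c e ∨ z ∈ e ∧ ∀ f ∈ M, c f ≠ c s(w, z)) → c s(w, z) ∈ F := by
  classical
  by_contra! hF
  have hpair (a b : α) := hF {a, b} card_le_two
  simp only [mem_insert, mem_singleton, not_or] at hpair
  have hnew : ∀ x ∈ e, G.Adj w x ∧ ∀ f ∈ M, c f ≠ c s(w, x) := by
    intro x hx
    obtain ⟨y, rfl⟩ := Sym2.mem_iff_exists.1 hx
    obtain ⟨z, hz, hze, hne, hny⟩ := hpair (c s(x, y)) (c s(w, y))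
    obtain ⟨hz_mem, hzM⟩ := hze.resolve_left hne
    obtain rfl | rfl := Sym2.mem_iff.1 hz_mem
    · exact ⟨hz, hzM⟩
    · exact absurd rfl hny
  refine h ⟨fun x hx ↦ (hnew x hx).1, fun x hx ↦ (hnew x hx).2, ?_, ?_⟩
  · intro x hx y hy hxy
    by_contra hne
    obtain rfl : e = s(x, y) := (Sym2.mem_and_mem_iff hne).1 ⟨hx, hy⟩
    obtain ⟨z, -, hze, hne, hnx⟩ := hpair (c s(x, y)) (c s(w, x))
    obtain rfl | rfl := Sym2.mem_iff.1 (hze.resolve_left hne).1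
    · exact hnx rfl
    · exact hnx hxy.symm
  · induction e with | _ x y
    obtain ⟨z, hz, hze, hnx, hny⟩ := hpair (c s(w, x)) (c s(w, y))
    refine ⟨z, hz, hze.resolve_right fun ⟨hz_mem, _⟩ ↦ ?_⟩
    obtain rfl | rfl := Sym2.mem_iff.1 hz_mem
    · exact hnx rfl
    · exact hny rfl

lemma exists_isAttached [DecidableEq V]
    (hw : ∀ z, G.Adj w z → (∀ f ∈ M, c f ≠ c s(w, z)) → z ∈ coveredVertices M)
    (hd : 2 * #M < colorDegree G c w) : ∃ e ∈ M, IsAttached G c M w e := by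
  classical
  by_contra! hall
  choose! F hFcard hF using fun e he ↦ exists_card_le_two_of_not_isAttached (hall e he)
  have hcover : ∀ z, G.Adj w z → c s(w, z) ∈ M.biUnion F := by
    intro z hz
    by_cases hnew : ∀ f ∈ M, c f ≠ c s(w, z)
    · obtain ⟨e, he, hze⟩ := mem_coveredVertices.1 (hw z hz hnew)
      exact mem_biUnion.2 ⟨e, he, hF e he z hz (.inr ⟨hze, hnew⟩)⟩
    · push Not at hnew
      obtain ⟨e, he, hce⟩ := hnew
      exact mem_biUnion.2 ⟨e, he, hF e he z hz (.inl hce.symm)⟩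
  have := (colorDegree_le_card hcover).trans (card_biUnion_le_card_mul M F 2 hFcard)
  omega

namespace IsRainbowMatching

lemma card_le_card_filter_add_two [DecidableEq V] (hM : IsRainbowMatching G c M) :
    #M ≤ #{f ∈ M | f ≠ e ∧ z ∉ f} + 2 := by
  have hz : #{f ∈ M | z ∈ f} ≤ 1 := by
    refine card_le_one.2 fun f hf g hg ↦ ?_
    rw [mem_filter] at hf hg
    by_contra hfg
    exact hM.2.1 f hf.1 g hg.1 hfg z hf.2 hg.2
  have hsub : M ⊆ {f ∈ M | f ≠ e ∧ z ∉ f} ∪ ({e} ∪ {f ∈ M | z ∈ f}) := by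
    intro f hf
    simp only [mem_union, mem_filter, mem_singleton]
    tauto
  have := card_le_card hsub
  have := card_union_le {f ∈ M | f ≠ e ∧ z ∉ f} ({e} ∪ {f ∈ M | z ∈ f})
  have := card_union_le {e} {f ∈ M | z ∈ f}
  have := card_singleton e
  omega

lemma exists_exchange [DecidableEq V] (hM : IsRainbowMatching G c M) (he : e ∈ M)
    (hw : w ∉ coveredVertices M) (hwz : G.Adj w z) (hc : c s(w, z) = c e) :
    ∃ N, IsRainbowMatching G c N ∧ #M ≤ #N + 1 ∧ (∀ f ∈ N, ∃ g ∈ M, c g = c f) ∧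
      ∀ v ∈ coveredVertices N, v = w ∨ v = z ∨ v ∈ coveredVertices M ∧ v ∉ e := by
  let M' : Finset (Sym2 V) := {f ∈ M | f ≠ e ∧ z ∉ f}
  have hM' : ∀ f ∈ M', f ∈ M ∧ f ≠ e ∧ z ∉ f := fun f hf ↦ mem_filter.1 hf
  have hcov : ∀ v ∈ s(w, z), v ∉ coveredVertices M' := by
    simp only [Sym2.mem_iff, forall_eq_or_imp, forall_eq]
    refine ⟨fun h ↦ hw (coveredVertices_mono (filter_subset _ M) h), fun h ↦ ?_⟩
    obtain ⟨f, hf, hzf⟩ := mem_coveredVertices.1 h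
    exact (hM' f hf).2.2 hzf
  have hcolor : ∀ f ∈ M', c f ≠ c s(w, z) := fun f hf hfc ↦
    (hM' f hf).2.1 (hM.2.2 f (hM' f hf).1 e he (hfc.trans hc))
  refine ⟨_, (hM.subset (filter_subset _ M)).insert hwz hcov hcolor, ?_, ?_, fun v hv ↦ ?_⟩
  · rw [card_insert_of_color_ne hcolor]
    exact hM.card_le_card_filter_add_two
  · simp only [mem_insert, forall_eq_or_imp]
    exact ⟨⟨e, he, hc.symm⟩, fun f hf ↦ ⟨f, (hM' f hf).1, rfl⟩⟩
  · obtain hv | hv := mem_coveredVertices_insert.1 hv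
    · exact (Sym2.mem_iff.1 hv).imp_right .inl
    · obtain ⟨f, hf, hvf⟩ := mem_coveredVertices.1 hv
      obtain ⟨hfM, hfe, -⟩ := hM' f hf
      exact .inr (.inr ⟨mem_coveredVertices.2 ⟨f, hfM, hvf⟩, hM.2.1 f hfM e he hfe v hvf⟩)

lemma exists_card_eq_add_two_of_isAttached [DecidableEq V] (hN : IsRainbowMatching G c N)
    (hcolor : ∀ f ∈ N, ∃ g ∈ M, c g = c f) (he : e ∈ G.edgeSet)
    (he_cov : ∀ v ∈ e, v ∉ coveredVertices N) (hcard : 2 < #S)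
    (hS : ∀ u ∈ S, u ∉ coveredVertices N ∧ IsAttached G c M u e) :
    ∃ L, IsRainbowMatching G c L ∧ #L = #N + 2 := by
  induction e with | _ x y
  have hxy : x ≠ y := (he : G.Adj x y).ne
  have hx := Sym2.mem_mk_left x y
  have hy := Sym2.mem_mk_right x y
  obtain ⟨p, hp, q, hq, hpq, hc⟩ : ∃ p ∈ S, ∃ q ∈ S, p ≠ q ∧ c s(p, x) ≠ c s(q, y) :=
    exists_ne_and_apply_ne_apply hcard fun u hu hc ↦ hxy ((hS u hu).2.injOn x hx y hy hc)
  obtain ⟨hpN, hp_att⟩ := hS p hp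
  obtain ⟨hqN, hq_att⟩ := hS q hq
  have hnew : ∀ u ∈ S, ∀ v ∈ s(x, y), ∀ f ∈ N, c f ≠ c s(u, v) := by
    intro u hu v hv f hf
    obtain ⟨g, hg, hgf⟩ := hcolor f hf
    exact hgf ▸ (hS u hu).2.color_ne v hv g hg
  have hdisj : ∀ v ∈ s(p, x), v ∉ s(q, y) := by
    have hpy : p ≠ y := fun h ↦ hp_att.notMem (h ▸ hy)
    have hxq : x ≠ q := fun h ↦ hq_att.notMem (h ▸ hx)
    simp [hpq, hxy, hpy, hxq]
  exact hN.exists_card_eq_add_two_of_disjoint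
    (hp_att.adj x hx) (by simp [hpN, he_cov x hx]) (hnew p hp x hx)
    (hq_att.adj y hy) (by simp [hqN, he_cov y hy]) (hnew q hq y hy) hdisj hc

lemma exists_card_eq_succ_of_isAttached [DecidableEq V] (hM : IsRainbowMatching G c M)
    (he : e ∈ M) (hcard : 4 < #S) (hS : ∀ w ∈ S, w ∉ coveredVertices M ∧ IsAttached G c M w e) :
    ∃ N, IsRainbowMatching G c N ∧ #N = #M + 1 := by
  obtain ⟨w, hw⟩ : S.Nonempty := card_pos.1 (by omega)
  obtain ⟨hwM, hwe⟩ := hS w hw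
  obtain ⟨z, hwz, hcz⟩ := hwe.exists_adj_color_eq
  have hze : z ∉ e := fun hze ↦ hwe.color_ne z hze e he hcz.symm
  obtain ⟨N, hN, hMN, hNcolor, hNcov⟩ := hM.exists_exchange he hwM hwz hcz
  have heN : ∀ v ∈ e, v ∉ coveredVertices N := by
    intro v hv hvN
    obtain rfl | rfl | hvM := hNcov v hvN
    exacts [hwe.notMem hv, hze hv, hvM.2 hv]
  have hrest : ∀ u ∈ (S.erase w).erase z, u ∉ coveredVertices N ∧ IsAttached G c M u e := by
    intro u hu
    obtain ⟨huz, huw, huS⟩ : u ≠ z ∧ u ≠ w ∧ u ∈ S := by simpa using hu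
    refine ⟨fun huN ↦ ?_, (hS u huS).2⟩
    obtain h | h | h := hNcov u huN
    exacts [huw h, huz h, (hS u huS).1 h.1]
  have hcard_rest : 2 < #((S.erase w).erase z) := by
    have hw_card : #S - 1 ≤ #(S.erase w) := pred_card_le_card_erase
    have hz_card : #(S.erase w) - 1 ≤ #((S.erase w).erase z) := pred_card_le_card_erase
    omega
  obtain ⟨L, hL, hLcard⟩ :=
    hN.exists_card_eq_add_two_of_isAttached hNcolor (hM.1 he) heN hcard_rest hrest
  exact hL.exists_card_eq (by omega)

lemma exists_card_eq_succ_of_four_mul_card_lt_card [DecidableEq V] (hM : IsRainbowMatching G c M)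
    (hcard : 4 * #M < #S) (hS : ∀ w ∈ S, w ∉ coveredVertices M ∧ 2 * #M < colorDegree G c w) :
    ∃ N, IsRainbowMatching G c N ∧ #N = #M + 1 := by
  classical
  by_cases hext : ∃ w ∈ S, ∃ z, G.Adj w z ∧ (∀ f ∈ M, c f ≠ c s(w, z)) ∧ z ∉ coveredVertices M
  · obtain ⟨w, hw, z, hwz, hc, hz⟩ := hext
    refine ⟨_, hM.insert (e := s(w, z)) hwz ?_ hc, card_insert_of_color_ne hc⟩
    simp [(hS w hw).1, hz]
  · push Not at hext
    obtain ⟨e, he, hfiber⟩ : ∃ e ∈ M, 4 < #{w ∈ S | IsAttached G c M w e} := by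
      by_contra! hfew
      have hcover : S ⊆ M.biUnion fun e ↦ {w ∈ S | IsAttached G c M w e} := by
        intro w hw
        obtain ⟨e, he, hwe⟩ := exists_isAttached (hext w hw) (hS w hw).2
        exact mem_biUnion.2 ⟨e, he, mem_filter.2 ⟨hw, hwe⟩⟩
      have := (card_le_card hcover).trans (card_biUnion_le_card_mul M _ 4 hfew)
      omega
    refine hM.exists_card_eq_succ_of_isAttached he hfiber fun w hw ↦ ?_
    obtain ⟨hwS, hwe⟩ := mem_filter.1 hw
    exact ⟨(hS w hwS).1, hwe⟩

lemma exists_card_eq_succ_of_colorDegree_le (hM : IsRainbowMatching G c M)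
    (hle : ∀ v ∈ S, colorDegree G c v ≤ 3 * #M)
    (hsum : 2 * #M * #S + 6 * #M ^ 2 < ∑ v ∈ S, colorDegree G c v) :
    ∃ N, IsRainbowMatching G c N ∧ #N = #M + 1 := by
  classical
  let D := {v ∈ S | 2 * #M < colorDegree G c v}
  have hsum_le : ∑ v ∈ S, colorDegree G c v ≤ 2 * #M * #S + #M * #D :=
    sum_le_mul_card_add_mul_card_filter fun v hv ↦ (hle v hv).trans_eq (by ring)
  have hD : 6 * #M < #D := by
    refine lt_of_mul_lt_mul_left (a := #M) ?_ (Nat.zero_le _)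
    linarith
  refine hM.exists_card_eq_succ_of_four_mul_card_lt_card (S := D \ coveredVertices M)
    ?_ fun w hw ↦ ?_
  · have := le_card_sdiff (coveredVertices M) D
    have := card_coveredVertices_le (M := M)
    omega
  · obtain ⟨hwD, hwM⟩ := mem_sdiff.1 hw
    exact ⟨hwM, (mem_filter.1 hwD).2⟩

end IsRainbowMatching

theorem general_rainbow_matching_general {m : ℕ} (hS : G.support ⊆ S) (hn : 3 * m ^ 2 ≤ #S)
    (h : 2 * m * #S ≤ ∑ v ∈ S, colorDegree G c v) :
    ∃ M : Finset (Sym2 V), IsRainbowMatching G c M ∧ #M = m := by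
  classical
  induction m generalizing G S with
  | zero => exact ⟨∅, .empty, card_empty⟩
  | succ m ih =>
    by_cases hhigh : ∃ v ∈ S, 3 * m < colorDegree G c v
    · obtain ⟨v, hv, hvd⟩ := hhigh
      have hcard := card_erase_add_one hv
      have hsum := sum_colorDegree_le_sum_deleteIncidenceSet (c := c) hS hv
      obtain ⟨M, hM, rfl⟩ := ih (support_deleteIncidenceSet_subset hS) (by nlinarith) (by nlinarith)
      have hvM := hM.notMem_coveredVertices_deleteIncidenceSet
      have hMG := hM.mono (G.deleteIncidenceSet_le v)
      exact hMG.exists_card_eq_succ_of_three_mul_card_lt_colorDegree hvM hvd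
    · push Not at hhigh
      obtain ⟨M, hM, rfl⟩ := ih hS (by nlinarith) (by nlinarith)
      exact hM.exists_card_eq_succ_of_colorDegree_le hhigh (by nlinarith)

end

/-- If `G` is a graph on `n ≥ 3 * m ^ 2 + 4 * m` vertices and `c` is an edge coloring
with total color degree at least `2 * m * n`, then `G` contains a rainbow matching of
size `m`. -/
theorem general_rainbow_matching [Fintype V] (G : SimpleGraph V)
    (c : Sym2 V → α) (m : ℕ)
    (hn : 3 * m ^ 2 + 4 * m ≤ Fintype.card V)
    (h : 2 * m * Fintype.card V ≤ totalColorDegree G c) :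
    ∃ M : Finset (Sym2 V), IsRainbowMatching G c M ∧ M.card = m := by
  exact general_rainbow_matching_general (S := Finset.univ) (by simp) (by simp; omega) h
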